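/- arXiv:1807.07890 — 2 statements merged into one kernel-verified Lean document; each statement's English description precedes it below -/
import Mathlib

section
/- Let b ≥ 2 be an integer and let P = { 1 - k + 2πim/log b : m ∈ ℤ, and k = 0, k = 1, or k an even integer ≥ 2 }. There exists a function F : ℂ → ℂ such that: (i) F is analytic (complex differentiable) at every point of ℂ \ P; (ii) F(s) = ∑_{n=1}^∞ d_b(n) n^{-s} for every s with Re(s) > 1; (iii) (s-1)² F(s) → (b-1)/(2 log b) as s → 1 (s ≠ 1), and ((s-1)² F(s) - (b-1)/(2 log b))/(s-1) → ((b-1)/(2 log b)) log(2π) - (b+1)/4 as s → 1; (iv) for every nonzero m ∈ ℤ, with p = 1 + 2πim/log b, (s - p) F(s) → -((b-1)/(2πim)) ζ(2πim/log b) as s → p (s ≠ p); (v) for every m ∈ ℤ and every k with k = 1 or k an even integer ≥ 2, with p = 1 - k + 2πim/log b, (s - p) F(s) → (-1)^{k+1} ((b-1)/log b) ζ(2πim/log b) (B_k / k!) ∏_{j=1}^{k-1} (2πim/log b - j) as s → p (s ≠ p). -/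
/-!
Let `Z(w) = ∑ (d(n) - d(n - 1)) n⁻ʷ`, where `d` is the digit sum in base `b`. The digit rule
`d(bn + r) = d(n) + r` for `r < b` makes the difference `d(n) - d(n - 1)` equal to `1` plus a term
supported on the multiples of `b`, which reproduces the same difference at `n / b`. Hence
`Z(w) = ζ(w) (bʷ - b) / (bʷ - 1)`: the pole of `ζ` at `1` is cancelled, and the only singularities
are the simple poles at the zeros of `bʷ - 1`, all on the imaginary axis.

Summation by parts gives `Z(w) = w ∫₁^∞ d(⌊x⌋) x^(-w - 1) dx`. Comparing each `n⁻ˢ` with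
`∫₀¹ (n + t)⁻ˢ dt` by the Euler–Maclaurin formula therefore expresses the Dirichlet series of `d` as
`Z(s - 1) / (s - 1) + ∑ₖ (B_(k+1) / (k+1)!) s(s+1)⋯(s+k-1) Z(s + k)`, with `B₁ = 1/2`, plus a
remainder which converges in a half-plane that moves left with the number of terms. The `k`-th term
carries the poles of `Z` to the abscissa `-k`, and the term `Z(s - 1) / (s - 1)` accounts for those
on the line `re s = 1`, with a double pole at `1`.
-/

open Filter Topology

noncomputable section

/-- The base-`b` digit sum of `n`. -/
def digitSum (b n : ℕ) : ℕ := (Nat.digits b n).sum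

theorem differentiable_intervalIntegral_mul_cpow {a b : ℝ} {g φ : ℝ → ℂ}
    (hg : ContinuousOn g (Set.uIcc a b)) (hφ : ContinuousOn φ (Set.uIcc a b))
    (hφ_slit : ∀ t ∈ Set.uIcc a b, φ t ∈ Complex.slitPlane) :
    Differentiable ℂ fun s : ℂ => ∫ t in a..b, g t * φ t ^ s := by
  intro s₀
  have hφ_snd : ContinuousOn (fun p : ℂ × ℝ => φ p.2) (Set.univ ×ˢ Set.uIcc a b) :=
    hφ.comp continuousOn_snd fun p hp => hp.2
  have hderiv_cont : ContinuousOn (fun p : ℂ × ℝ => g p.2 * (φ p.2 ^ p.1 * Complex.log (φ p.2)))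
      (Set.univ ×ˢ Set.uIcc a b) :=
    (hg.comp continuousOn_snd fun p hp => hp.2).mul
      ((hφ_snd.cpow continuousOn_fst fun p hp => hφ_slit _ hp.2).mul
        (hφ_snd.clog fun p hp => hφ_slit _ hp.2))
  have hcont (s : ℂ) : ContinuousOn (fun t => g t * φ t ^ s) (Set.uIcc a b) :=
    hg.mul (hφ.cpow_const hφ_slit)
  obtain ⟨C, hC⟩ := ((isCompact_closedBall s₀ 1).prod isCompact_uIcc).exists_bound_of_continuousOn
    (hderiv_cont.mono (Set.prod_mono_left (Set.subset_univ _)))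
  refine (intervalIntegral.hasDerivAt_integral_of_dominated_loc_of_deriv_le
    (F' := fun s t => g t * (φ t ^ s * Complex.log (φ t))) (bound := fun _ => C)
    (Metric.closedBall_mem_nhds s₀ one_pos) (.of_forall fun s => ?_)
    (hcont s₀).intervalIntegrable ?_
    (.of_forall fun t ht s hs => hC (s, t) ⟨hs, Set.uIoc_subset_uIcc ht⟩) intervalIntegrable_const
    (.of_forall fun t ht s _ => ?_)).2.differentiableAt
  · exact ((hcont s).mono Set.uIoc_subset_uIcc).aestronglyMeasurable measurableSet_uIoc
  · refine ContinuousOn.aestronglyMeasurable ?_ measurableSet_uIoc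
    exact hderiv_cont.comp (f := fun t => (s₀, t)) (by fun_prop)
      fun t ht => ⟨trivial, Set.uIoc_subset_uIcc ht⟩
  · have hne := Complex.slitPlane_ne_zero (hφ_slit t (Set.uIoc_subset_uIcc ht))
    simpa using ((hasDerivAt_id s).const_cpow (Or.inl hne)).const_mul (g t)

theorem hasDerivAt_dslope {𝕜 : Type*} [NontriviallyNormedField 𝕜] [CompleteSpace 𝕜] [CharZero 𝕜]
    {f : 𝕜 → 𝕜} {c : 𝕜} (hf : AnalyticAt 𝕜 f c) :
    HasDerivAt (dslope f c) (iteratedDeriv 2 f c / 2) c := by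
  simpa using hf.hasFPowerSeriesAt.has_fpower_series_dslope_fslope.hasDerivAt

theorem ascPochhammer_eval_sub_natCast {R : Type*} [CommRing R] (w : R) (k : ℕ) :
    (ascPochhammer R k).eval (w - k) = ∏ j ∈ Finset.Icc 1 k, (w - j) := by
  have hcomp : w - k = w - 1 - k + 1 := by ring
  rw [hcomp, ← descPochhammer_eval_eq_ascPochhammer, descPochhammer_eval_eq_prod_range,
    ← Finset.Ico_add_one_right_eq_Icc, Finset.prod_Ico_eq_prod_range, Nat.add_sub_cancel]
  exact Finset.prod_congr rfl fun j _ => by rw [Nat.cast_add, Nat.cast_one, sub_sub]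

theorem lseriesHasSum_dilation {f : ℕ → ℂ} {s A : ℂ} {b : ℕ} (hb : b ≠ 0)
    (hf : LSeriesHasSum f s A) :
    LSeriesHasSum (fun n => if b ∣ n then f (n / b) else 0) s ((b : ℂ) ^ (-s) * A) := by
  refine ((mul_right_injective₀ hb).hasSum_iff fun n hn => ?_).1
    ((hf.mul_left ((b : ℂ) ^ (-s))).congr_fun fun n => ?_)
  · have hdvd : ¬ b ∣ n := fun ⟨q, hq⟩ => hn ⟨q, hq.symm⟩
    simp [LSeries.term_def, hdvd]
  · rcases eq_or_ne n 0 with rfl | hn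
    · simp
    · simp only [Function.comp_apply, LSeries.term_of_ne_zero hn,
        LSeries.term_of_ne_zero (mul_ne_zero hb hn), dvd_mul_right, if_true,
        Nat.mul_div_cancel_left n (Nat.pos_of_ne_zero hb), Nat.cast_mul,
        Complex.natCast_mul_natCast_cpow, Complex.cpow_neg, div_eq_mul_inv, mul_inv]
      ring

section NatCastCpow

variable {b : ℕ}

theorem natCast_cpow_eq_one_iff (hb : 1 < b) {w : ℂ} :
    (b : ℂ) ^ w = 1 ↔ ∃ m : ℤ, w = 2 * Real.pi * Complex.I * m / Real.log b := by
  have hlog : (Real.log b : ℂ) ≠ 0 :=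
    Complex.ofReal_ne_zero.2 (Real.log_pos (Nat.one_lt_cast.2 hb)).ne'
  rw [Complex.cpow_def_of_ne_zero (Nat.cast_ne_zero.2 (by lia)), Complex.exp_eq_one_iff,
    ← Complex.natCast_log]
  refine exists_congr fun m => ?_
  rw [eq_div_iff hlog, mul_comm w, mul_comm (m : ℂ)]

theorem re_two_pi_I_mul_div_log (b : ℕ) (m : ℤ) :
    (2 * Real.pi * Complex.I * m / Real.log b : ℂ).re = 0 := by
  rw [Complex.div_ofReal_re]
  simp

theorem natCast_cpow_ne_one_of_re_ne_zero (hb : 1 < b) {w : ℂ} (hw : w.re ≠ 0) :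
    (b : ℂ) ^ w ≠ 1 := fun h => by
  obtain ⟨m, rfl⟩ := (natCast_cpow_eq_one_iff hb).1 h
  exact hw (re_two_pi_I_mul_div_log b m)

theorem hasDerivAt_natCast_cpow (hb : b ≠ 0) (w : ℂ) :
    HasDerivAt (fun z : ℂ => (b : ℂ) ^ z) ((b : ℂ) ^ w * Real.log b) w := by
  simpa [Complex.natCast_log] using
    (hasDerivAt_id w).const_cpow (c := (b : ℂ)) (.inl (Nat.cast_ne_zero.2 hb))

theorem hasDerivAt_dslope_natCast_cpow_zero (hb : b ≠ 0) :
    HasDerivAt (dslope (fun z : ℂ => (b : ℂ) ^ z) 0) ((Real.log b : ℂ) ^ 2 / 2) 0 := by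
  have hexp : (fun z : ℂ => (b : ℂ) ^ z) = fun z => Complex.exp (Real.log b * z) := by
    funext z
    rw [Complex.cpow_def_of_ne_zero (Nat.cast_ne_zero.2 hb), Complex.natCast_log]
  rw [hexp]
  simpa using hasDerivAt_dslope (f := fun z => Complex.exp (Real.log b * z)) (c := 0) (by fun_prop)

theorem dslope_natCast_cpow_zero (hb : b ≠ 0) :
    dslope (fun z : ℂ => (b : ℂ) ^ z) 0 0 = Real.log b := by
  rw [dslope_same, (hasDerivAt_natCast_cpow hb 0).deriv]
  simp

end NatCastCpow

/-- `f` has at most a simple pole at `p`, with residue `r` there; stated as a limit, it does not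
require `f` to be meromorphic. -/
def HasSimpleResidueAt (f : ℂ → ℂ) (r p : ℂ) : Prop :=
  Tendsto (fun s => (s - p) * f s) (𝓝[≠] p) (𝓝 r)

namespace HasSimpleResidueAt

variable {f g : ℂ → ℂ} {p r r' : ℂ}

theorem of_continuousAt (hf : ContinuousAt f p) : HasSimpleResidueAt f 0 p := by
  have hcont : ContinuousAt (fun s => (s - p) * f s) p := (by fun_prop : ContinuousAt _ p).mul hf
  simpa [HasSimpleResidueAt] using hcont.tendsto.mono_left (nhdsWithin_le_nhds (s := {p}ᶜ))

theorem congr (hf : HasSimpleResidueAt f r p) (hfg : f =ᶠ[𝓝 p] g) :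
    HasSimpleResidueAt g r p :=
  Tendsto.congr' ((hfg.filter_mono nhdsWithin_le_nhds).mono fun s hs => by rw [hs]) hf

theorem add (hf : HasSimpleResidueAt f r p) (hg : HasSimpleResidueAt g r' p) :
    HasSimpleResidueAt (fun s => f s + g s) (r + r') p := by
  simpa only [HasSimpleResidueAt, mul_add] using Tendsto.add hf hg

theorem sub (hf : HasSimpleResidueAt f r p) (hg : HasSimpleResidueAt g r' p) :
    HasSimpleResidueAt (fun s => f s - g s) (r - r') p := by
  simpa only [HasSimpleResidueAt, mul_sub] using Tendsto.sub hf hg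

theorem sum {ι : Type*} {u : Finset ι} {f : ι → ℂ → ℂ} {r : ι → ℂ}
    (hf : ∀ i ∈ u, HasSimpleResidueAt (f i) (r i) p) :
    HasSimpleResidueAt (fun s => ∑ i ∈ u, f i s) (∑ i ∈ u, r i) p := by
  simpa only [HasSimpleResidueAt, Finset.mul_sum] using tendsto_finsetSum u hf

theorem continuousAt_mul (hf : HasSimpleResidueAt f r p) (hg : ContinuousAt g p) :
    HasSimpleResidueAt (fun s => g s * f s) (g p * r) p := by
  simpa only [HasSimpleResidueAt, mul_left_comm] using
    (hg.tendsto.mono_left nhdsWithin_le_nhds).mul hf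

theorem div_continuousAt (hf : HasSimpleResidueAt f r p) (hg : ContinuousAt g p) (hgp : g p ≠ 0) :
    HasSimpleResidueAt (fun s => f s / g s) (r / g p) p := by
  simpa only [div_eq_inv_mul] using hf.continuousAt_mul (g := fun s => (g s)⁻¹) (hg.inv₀ hgp)

theorem comp_add_const {c : ℂ} (hf : HasSimpleResidueAt f r (p + c)) :
    HasSimpleResidueAt (fun s => f (s + c)) r p := by
  have hshift : Tendsto (· + c) (𝓝[≠] p) (𝓝[≠] (p + c)) :=
    ((Homeomorph.addRight c).map_punctured_nhds_eq p).le
  simpa only [HasSimpleResidueAt, Function.comp_def, add_sub_add_right_eq_sub] using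
    Tendsto.comp hf hshift

theorem comp_sub_const {c : ℂ} (hf : HasSimpleResidueAt f r (p - c)) :
    HasSimpleResidueAt (fun s => f (s - c)) r p := by
  simpa only [sub_eq_add_neg] using comp_add_const (c := -c) (by rwa [← sub_eq_add_neg])

end HasSimpleResidueAt

/-! ### Euler–Maclaurin remainders -/

/-- The coefficient `B_k / k!` of the Euler–Maclaurin formula, with the convention `B₁ = 1/2`. -/
def eulerMaclaurinCoeff (k : ℕ) : ℂ := bernoulli' k / k.factorial

/-- The `k`-th Euler–Maclaurin remainder `∫₀¹ B_k(t)/k! (x + t)⁻ˢ dt` of `y ↦ y⁻ˢ` on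
`[x, x + 1]`. -/
def eulerMaclaurinIntegral (k : ℕ) (x : ℝ) (s : ℂ) : ℂ :=
  ∫ t in (0 : ℝ)..1, ((bernoulliFun k t / k.factorial : ℝ) : ℂ) * ((x + t : ℝ) : ℂ) ^ (-s)

theorem ofReal_add_mem_slitPlane {x : ℝ} (hx : 0 < x) {t : ℝ} (ht : t ∈ Set.uIcc (0 : ℝ) 1) :
    ((x + t : ℝ) : ℂ) ∈ Complex.slitPlane := by
  rw [Set.uIcc_of_le zero_le_one] at ht
  exact Complex.ofReal_mem_slitPlane.2 (by linarith [ht.1])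

theorem continuousOn_ofReal_add_cpow {x : ℝ} (hx : 0 < x) (w : ℂ) :
    ContinuousOn (fun t : ℝ => ((x + t : ℝ) : ℂ) ^ w) (Set.uIcc 0 1) :=
  ContinuousOn.cpow_const (by fun_prop) fun _ ht => ofReal_add_mem_slitPlane hx ht

theorem hasDerivAt_ofReal_add_cpow_neg {x t : ℝ} (h : 0 < x + t) (s : ℂ) :
    HasDerivAt (fun t : ℝ => ((x + t : ℝ) : ℂ) ^ (-s))
      (-s * ((x + t : ℝ) : ℂ) ^ (-(s + 1))) t := by
  have hadd : HasDerivAt (fun t : ℝ => ((x + t : ℝ) : ℂ)) 1 t := by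
    simpa using ((hasDerivAt_id t).const_add x).ofReal_comp
  have hpow := (hasDerivAt_id ((x + t : ℝ) : ℂ)).cpow_const (c := -s)
    (Complex.ofReal_mem_slitPlane.2 h)
  rw [show -(s + 1) = -s - 1 by ring]
  simpa [Function.comp_def] using hpow.comp t hadd

theorem hasDerivAt_bernoulliFun_div_factorial (k : ℕ) (t : ℝ) :
    HasDerivAt (fun t => bernoulliFun (k + 1) t / (k + 1).factorial)
      (bernoulliFun k t / k.factorial) t := by
  refine ((hasDerivAt_bernoulliFun (k + 1) t).div_const _).congr_deriv ?_
  rw [Nat.factorial_succ, Nat.cast_mul, Nat.add_sub_cancel,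
    mul_div_mul_left _ _ (Nat.cast_ne_zero.2 k.succ_ne_zero)]

theorem bernoulliFun_eval_one_div_factorial (k : ℕ) :
    ((bernoulliFun k 1 / k.factorial : ℝ) : ℂ) = eulerMaclaurinCoeff k := by
  rw [bernoulliFun, Polynomial.eval_one_map, Polynomial.bernoulli_eval_one, eq_ratCast,
    eulerMaclaurinCoeff]
  push_cast
  rfl

theorem bernoulliFun_eval_zero_div_factorial (k : ℕ) :
    ((bernoulliFun k 0 / k.factorial : ℝ) : ℂ) =
      eulerMaclaurinCoeff k - if k = 1 then 1 else 0 := by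
  rw [← bernoulliFun_eval_one_div_factorial, bernoulliFun_eval_one]
  split_ifs with hk <;> simp [hk]

theorem eulerMaclaurinCoeff_eq_bernoulli (k : ℕ) :
    eulerMaclaurinCoeff k = (-1) ^ k * (bernoulli k / k.factorial) := by
  simp [eulerMaclaurinCoeff, bernoulli'_eq_bernoulli, mul_div_assoc]

theorem eulerMaclaurinCoeff_eq_zero {k : ℕ} (hk : Odd k) (hk₁ : 1 < k) :
    eulerMaclaurinCoeff k = 0 := by
  simp [eulerMaclaurinCoeff, bernoulli'_eq_zero_of_odd hk hk₁]

theorem eulerMaclaurinIntegral_zero {x : ℝ} (hx : 0 < x) (s : ℂ) :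
    s * eulerMaclaurinIntegral 0 x (s + 1) = (x : ℂ) ^ (-s) - ((x : ℂ) + 1) ^ (-s) := by
  have hint : IntervalIntegrable (fun t : ℝ => -s * ((x + t : ℝ) : ℂ) ^ (-(s + 1)))
      MeasureTheory.volume 0 1 :=
    ((continuousOn_ofReal_add_cpow hx _).const_mul _).intervalIntegrable
  have hftc := intervalIntegral.integral_eq_sub_of_hasDerivAt (fun t ht =>
    hasDerivAt_ofReal_add_cpow_neg (Complex.ofReal_mem_slitPlane.1 (ofReal_add_mem_slitPlane hx ht))
      s) hint
  rw [intervalIntegral.integral_const_mul] at hftc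
  simp only [eulerMaclaurinIntegral, bernoulliFun_zero, Nat.factorial_zero, Nat.cast_one, div_one,
    Complex.ofReal_one, one_mul]
  simp only [add_zero, Complex.ofReal_add x 1, Complex.ofReal_one] at hftc
  linear_combination -hftc

theorem eulerMaclaurinIntegral_succ (k : ℕ) {x : ℝ} (hx : 0 < x) (s : ℂ) :
    eulerMaclaurinIntegral k x s =
      (if k = 0 then (x : ℂ) ^ (-s) else 0)
        - eulerMaclaurinCoeff (k + 1) * ((x : ℂ) ^ (-s) - ((x : ℂ) + 1) ^ (-s))
        + s * eulerMaclaurinIntegral (k + 1) x (s + 1) := by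
  have hparts := intervalIntegral.integral_mul_deriv_eq_deriv_mul
    (fun t _ => (hasDerivAt_bernoulliFun_div_factorial k t).ofReal_comp)
    (fun t ht => hasDerivAt_ofReal_add_cpow_neg
      (Complex.ofReal_mem_slitPlane.1 (ofReal_add_mem_slitPlane hx ht)) s)
    (Continuous.intervalIntegrable (by have := continuous_bernoulliFun k; fun_prop) 0 1)
    ((continuousOn_ofReal_add_cpow hx _).const_mul _).intervalIntegrable
  have hleft : (∫ t in (0 : ℝ)..1, ((bernoulliFun (k + 1) t / (k + 1).factorial : ℝ) : ℂ) *
      (-s * ((x + t : ℝ) : ℂ) ^ (-(s + 1)))) = -s * eulerMaclaurinIntegral (k + 1) x (s + 1) := by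
    simp only [eulerMaclaurinIntegral, mul_left_comm _ (-s), intervalIntegral.integral_const_mul]
  rw [hleft, bernoulliFun_eval_one_div_factorial, bernoulliFun_eval_zero_div_factorial,
    ← eulerMaclaurinIntegral] at hparts
  simp only [add_zero, Complex.ofReal_add x 1, Complex.ofReal_one, Nat.add_eq_right] at hparts
  split_ifs at hparts ⊢ <;> linear_combination hparts

theorem exists_norm_eulerMaclaurinIntegral_le (k : ℕ) :
    ∃ C : ℝ, 0 ≤ C ∧ ∀ {x : ℝ} {s : ℂ}, 0 < x → 0 ≤ s.re →
      ‖eulerMaclaurinIntegral k x s‖ ≤ C * x ^ (-s.re) := by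
  obtain ⟨C, hC⟩ := (isCompact_Icc (a := (0 : ℝ)) (b := 1)).exists_bound_of_continuousOn
    (f := fun t => bernoulliFun k t / k.factorial)
    (by have := continuous_bernoulliFun k; fun_prop)
  refine ⟨C, (norm_nonneg _).trans (hC 0 (by simp)), fun {x s} hx hs => ?_⟩
  refine (intervalIntegral.norm_integral_le_of_norm_le_const fun t ht => ?_).trans_eq
    (by rw [sub_zero, abs_one, mul_one])
  rw [Set.uIoc_of_le zero_le_one] at ht
  rw [norm_mul, Complex.norm_real,
    Complex.norm_cpow_eq_rpow_re_of_pos (by linarith [ht.1]), Complex.neg_re]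
  have hBernoulli := hC t ⟨ht.1.le, ht.2⟩
  exact mul_le_mul hBernoulli
    (Real.rpow_le_rpow_of_nonpos hx (by linarith [ht.1]) (neg_nonpos.2 hs))
    (by have := ht.1; positivity) ((norm_nonneg _).trans hBernoulli)

theorem differentiable_eulerMaclaurinIntegral (k : ℕ) {x : ℝ} (hx : 0 < x) :
    Differentiable ℂ (eulerMaclaurinIntegral k x) :=
  (differentiable_intervalIntegral_mul_cpow
    (by have := continuous_bernoulliFun k; fun_prop) (by fun_prop)
    fun _ ht => ofReal_add_mem_slitPlane hx ht).comp differentiable_neg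

/-- The summatory Euler–Maclaurin remainder `∑ₙ a n ∫₀¹ B_k(t)/k! (n + t)⁻ˢ dt`. -/
def eulerMaclaurinRemainder (a : ℕ → ℂ) (k : ℕ) (s : ℂ) : ℂ :=
  ∑' n : ℕ, a n * eulerMaclaurinIntegral k n s

/-- The sequence `a n - a (n - 1)`; its value `0` at `n = 0` is ignored by `LSeries`. -/
def backwardDiff (a : ℕ → ℂ) (n : ℕ) : ℂ := a n - a (n - 1)

section Remainder

variable {a : ℕ → ℂ}

theorem exists_norm_mul_eulerMaclaurinIntegral_le (ha₀ : a 0 = 0) (k : ℕ) :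
    ∃ C : ℝ, 0 ≤ C ∧ ∀ (n : ℕ) {s : ℂ}, 0 ≤ s.re →
      ‖a n * eulerMaclaurinIntegral k n s‖ ≤ C * ‖LSeries.term a s n‖ := by
  obtain ⟨C, hC₀, hC⟩ := exists_norm_eulerMaclaurinIntegral_le k
  refine ⟨C, hC₀, fun n s hs => ?_⟩
  rcases n.eq_zero_or_pos with rfl | hn
  · simp [ha₀]
  rw [norm_mul, LSeries.norm_term_eq, if_neg hn.ne', div_eq_mul_inv,
    ← Real.rpow_neg n.cast_nonneg, mul_left_comm]
  exact mul_le_mul_of_nonneg_left (hC (Nat.cast_pos.2 hn) hs) (norm_nonneg _)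

theorem lseriesSummable_of_one_lt_re (ha : LSeries.abscissaOfAbsConv a ≤ 1) {s : ℂ}
    (hs : 1 < s.re) : LSeriesSummable a s :=
  LSeriesSummable_of_abscissaOfAbsConv_lt_re (ha.trans_lt (by exact_mod_cast hs))

theorem hasSum_eulerMaclaurinRemainder (ha₀ : a 0 = 0) (ha : LSeries.abscissaOfAbsConv a ≤ 1)
    (k : ℕ) {s : ℂ} (hs : 1 < s.re) :
    HasSum (fun n : ℕ => a n * eulerMaclaurinIntegral k n s) (eulerMaclaurinRemainder a k s) := by
  obtain ⟨C, -, hC⟩ := exists_norm_mul_eulerMaclaurinIntegral_le ha₀ k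
  exact (Summable.of_norm_bounded ((lseriesSummable_of_one_lt_re ha hs).norm.mul_left C)
    fun n => hC n (by linarith)).hasSum

theorem differentiableAt_eulerMaclaurinRemainder (ha₀ : a 0 = 0)
    (ha : LSeries.abscissaOfAbsConv a ≤ 1) (k : ℕ) {s : ℂ} (hs : 1 < s.re) :
    DifferentiableAt ℂ (eulerMaclaurinRemainder a k) s := by
  obtain ⟨C, hC₀, hC⟩ := exists_norm_mul_eulerMaclaurinIntegral_le ha₀ k
  obtain ⟨σ, hσ, hσs⟩ := exists_between hs
  have hopen : IsOpen {z : ℂ | σ < z.re} := isOpen_lt continuous_const Complex.continuous_re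
  refine (Complex.differentiableOn_tsum_of_summable_norm (U := {z : ℂ | σ < z.re})
    ((lseriesSummable_of_one_lt_re ha (s := σ) (by simpa)).norm.mul_left C)
    (fun n => ?_) hopen fun n z hz => ?_).differentiableAt (hopen.mem_nhds hσs)
  · rcases n.eq_zero_or_pos with rfl | hn
    · simp [ha₀]
    · exact ((differentiable_eulerMaclaurinIntegral k (Nat.cast_pos.2 hn)).const_mul
        _).differentiableOn
  · have hσz : σ < z.re := hz
    exact (hC n (by linarith)).trans (mul_le_mul_of_nonneg_left
      (LSeries.norm_term_le_of_re_le_re a (by simpa using hσz.le) n) hC₀)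

theorem mul_cpow_neg_sub_cpow_neg (ha₀ : a 0 = 0) (w : ℂ) (n : ℕ) :
    a n * ((n : ℂ) ^ (-w) - ((n : ℂ) + 1) ^ (-w)) =
      w * (a n * eulerMaclaurinIntegral 0 n (w + 1)) := by
  rcases n.eq_zero_or_pos with rfl | hn
  · simp [ha₀]
  · have hzero := eulerMaclaurinIntegral_zero (Nat.cast_pos.2 hn) w
    rw [Complex.ofReal_natCast] at hzero
    rw [← hzero, mul_left_comm]

theorem hasSum_mul_cpow_neg_sub_cpow_neg (ha₀ : a 0 = 0)
    (ha : LSeries.abscissaOfAbsConv a ≤ 1) {w : ℂ} (hw : 0 < w.re) :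
    HasSum (fun n : ℕ => a n * ((n : ℂ) ^ (-w) - ((n : ℂ) + 1) ^ (-w)))
      (w * eulerMaclaurinRemainder a 0 (w + 1)) := by
  simp only [mul_cpow_neg_sub_cpow_neg ha₀]
  exact (hasSum_eulerMaclaurinRemainder ha₀ ha 0 (by simpa)).mul_left w

theorem lseriesHasSum_backwardDiff (ha₀ : a 0 = 0) (ha : LSeries.abscissaOfAbsConv a ≤ 1)
    {w : ℂ} (hw : 1 < w.re) :
    LSeriesHasSum (backwardDiff a) w (w * eulerMaclaurinRemainder a 0 (w + 1)) := by
  have hdiff := hasSum_mul_cpow_neg_sub_cpow_neg ha₀ ha (w := w) (by linarith)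
  have hseries : HasSum (LSeries.term a w) (LSeries a w) :=
    (lseriesSummable_of_one_lt_re ha hw).LSeriesHasSum
  have hshift : HasSum (fun n : ℕ => a (n - 1) * (n : ℂ) ^ (-w))
      (LSeries a w - w * eulerMaclaurinRemainder a 0 (w + 1)) := by
    rw [← hasSum_nat_add_iff' 1, Finset.sum_range_one, Nat.zero_sub, ha₀, zero_mul, sub_zero]
    refine (hseries.sub hdiff).congr_fun fun n => ?_
    rw [LSeries.term_def₀ ha₀, Nat.add_sub_cancel, Nat.cast_succ]
    ring
  rw [← sub_sub_cancel (LSeries a w) (w * _)]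
  refine (hseries.sub hshift).congr_fun fun n => ?_
  rcases n.eq_zero_or_pos with rfl | hn
  · simp [ha₀]
  · simp only [LSeries.term_of_ne_zero hn.ne', backwardDiff, Complex.cpow_neg, div_eq_mul_inv,
      sub_mul]

theorem eulerMaclaurinRemainder_eq_add (ha₀ : a 0 = 0) (ha : LSeries.abscissaOfAbsConv a ≤ 1)
    (k : ℕ) {s : ℂ} (hs : 1 < s.re) :
    eulerMaclaurinRemainder a k s =
      (if k = 0 then LSeries a s else 0)
        - eulerMaclaurinCoeff (k + 1) * (s * eulerMaclaurinRemainder a 0 (s + 1))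
        + s * eulerMaclaurinRemainder a (k + 1) (s + 1) := by
  have hdiff := (hasSum_mul_cpow_neg_sub_cpow_neg ha₀ ha (w := s) (by linarith)).mul_left
    (eulerMaclaurinCoeff (k + 1))
  have hnext := (hasSum_eulerMaclaurinRemainder ha₀ ha (k + 1) (s := s + 1)
    (by rw [Complex.add_re, Complex.one_re]; linarith)).mul_left s
  have hseries : HasSum (fun n => if k = 0 then LSeries.term a s n else 0)
      (if k = 0 then LSeries a s else 0) := by
    split_ifs
    · exact (lseriesSummable_of_one_lt_re ha hs).LSeriesHasSum
    · exact hasSum_zero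
  refine ((tsum_congr fun n => ?_).trans ((hseries.sub hdiff).add hnext).tsum_eq)
  rcases n.eq_zero_or_pos with rfl | hn
  · simp [ha₀]
  · have hstep := eulerMaclaurinIntegral_succ k (Nat.cast_pos.2 hn) s
    rw [Complex.ofReal_natCast] at hstep
    rw [hstep, LSeries.term_def₀ ha₀]
    split_ifs <;> ring

end Remainder

/-! ### Continuation through the difference series -/

/-- `Z` continues the Dirichlet series `∑ (a n - a (n - 1)) n⁻ʷ` from the half-plane `1 < re w` to
the plane, with singularities on the imaginary axis only. -/
structure IsDifferenceContinuation (a : ℕ → ℂ) (Z : ℂ → ℂ) : Prop where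
  map_zero : a 0 = 0
  abscissaOfAbsConv_le : LSeries.abscissaOfAbsConv a ≤ 1
  lseries_eq : ∀ {w : ℂ}, 1 < w.re → LSeries (backwardDiff a) w = Z w
  differentiableAt : ∀ {w : ℂ}, w.re ≠ 0 → DifferentiableAt ℂ Z w

/-- The Euler–Maclaurin expansion of `∑ a n n⁻ˢ` through the continued difference series `Z`,
stopped at the Bernoulli number `B_{N + 1}`; it represents the continuation where
`0 < re s + N`. -/
def eulerMaclaurinTruncation (a : ℕ → ℂ) (Z : ℂ → ℂ) (N : ℕ) (s : ℂ) : ℂ :=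
  Z (s - 1) / (s - 1)
    + ∑ k ∈ Finset.range (N + 1),
        eulerMaclaurinCoeff (k + 1) * (ascPochhammer ℂ k).eval s * Z (s + k)
    - (ascPochhammer ℂ (N + 1)).eval s * eulerMaclaurinRemainder a (N + 1) (s + N + 1)

/-- The continuation of `∑ a n n⁻ˢ` to the plane: at each `s` an Euler–Maclaurin truncation that is
long enough to be valid near `s`. -/
def eulerMaclaurinContinuation (a : ℕ → ℂ) (Z : ℂ → ℂ) (s : ℂ) : ℂ :=
  eulerMaclaurinTruncation a Z ⌈1 - s.re⌉₊ s

namespace IsDifferenceContinuation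

variable {a : ℕ → ℂ} {Z : ℂ → ℂ} {s : ℂ} {N : ℕ}

theorem eq_mul_eulerMaclaurinRemainder (h : IsDifferenceContinuation a Z) {w : ℂ}
    (hw : 0 < w.re) : Z w = w * eulerMaclaurinRemainder a 0 (w + 1) := by
  have hopen : IsOpen {z : ℂ | 0 < z.re} := isOpen_lt continuous_const Complex.continuous_re
  have hZ : AnalyticOnNhd ℂ Z {z : ℂ | 0 < z.re} :=
    DifferentiableOn.analyticOnNhd
      (fun z hz => (h.differentiableAt (ne_of_gt hz)).differentiableWithinAt) hopen
  have hR : AnalyticOnNhd ℂ (fun z => z * eulerMaclaurinRemainder a 0 (z + 1)) {z : ℂ | 0 < z.re} :=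
    DifferentiableOn.analyticOnNhd (fun z hz => (differentiableAt_id.mul
      (differentiableAt_comp_add_const.2 (differentiableAt_eulerMaclaurinRemainder h.map_zero
        h.abscissaOfAbsConv_le 0 (by simpa using hz)))).differentiableWithinAt) hopen
  have heq : Z =ᶠ[𝓝 2] fun z => z * eulerMaclaurinRemainder a 0 (z + 1) := by
    filter_upwards [(isOpen_lt continuous_const Complex.continuous_re).mem_nhds
      (show (1 : ℝ) < (2 : ℂ).re by simp)] with z hz
    rw [← h.lseries_eq hz,
      (lseriesHasSum_backwardDiff h.map_zero h.abscissaOfAbsConv_le hz).LSeries_eq]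
  exact hZ.eqOn_of_preconnected_of_eventuallyEq hR (convex_halfSpace_re_gt 0).isPreconnected
    (by simp) heq hw

theorem eulerMaclaurinRemainder_eq (h : IsDifferenceContinuation a Z) (k : ℕ) (hs : 1 < s.re) :
    eulerMaclaurinRemainder a k s =
      (if k = 0 then LSeries a s else 0) - eulerMaclaurinCoeff (k + 1) * Z s
        + s * eulerMaclaurinRemainder a (k + 1) (s + 1) := by
  rw [h.eq_mul_eulerMaclaurinRemainder (by linarith)]
  exact eulerMaclaurinRemainder_eq_add h.map_zero h.abscissaOfAbsConv_le k hs

theorem eulerMaclaurinTruncation_zero (h : IsDifferenceContinuation a Z) (hs : 1 < s.re) :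
    eulerMaclaurinTruncation a Z 0 s = LSeries a s := by
  have hs_sub : s - 1 ≠ 0 := sub_ne_zero.2 fun h₁ => by simp [h₁] at hs
  have hlead : Z (s - 1) / (s - 1) = eulerMaclaurinRemainder a 0 s := by
    rw [h.eq_mul_eulerMaclaurinRemainder (by simpa using hs), mul_div_cancel_left₀ _ hs_sub,
      sub_add_cancel]
  rw [eulerMaclaurinTruncation, hlead, h.eulerMaclaurinRemainder_eq 0 hs]
  simp only [zero_add, Finset.sum_range_one, ascPochhammer_zero, ascPochhammer_one,
    Polynomial.eval_one, Polynomial.eval_X, Nat.cast_zero, add_zero, if_true]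
  ring

theorem eulerMaclaurinTruncation_succ (h : IsDifferenceContinuation a Z) (hs : 0 < s.re + N) :
    eulerMaclaurinTruncation a Z (N + 1) s = eulerMaclaurinTruncation a Z N s := by
  have hstep := h.eulerMaclaurinRemainder_eq (N + 1) (s := s + N + 1) (by simpa)
  rw [if_neg N.succ_ne_zero] at hstep
  rw [eulerMaclaurinTruncation, eulerMaclaurinTruncation, Finset.sum_range_succ, hstep,
    ascPochhammer_succ_eval (S := ℂ) (N + 1)]
  push_cast
  rw [← add_assoc s]
  ring

theorem eulerMaclaurinTruncation_eq_of_le (h : IsDifferenceContinuation a Z) {M : ℕ} (hMN : M ≤ N)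
    (hs : 0 < s.re + M) : eulerMaclaurinTruncation a Z N s = eulerMaclaurinTruncation a Z M s := by
  induction N, hMN using Nat.le_induction with
  | base => rfl
  | succ N hMN ih =>
    have : (M : ℝ) ≤ N := Nat.cast_le.2 hMN
    rw [h.eulerMaclaurinTruncation_succ (by linarith), ih]

theorem eulerMaclaurinContinuation_eq_truncation (h : IsDifferenceContinuation a Z)
    (hs : 0 < s.re + N) :
    eulerMaclaurinContinuation a Z s = eulerMaclaurinTruncation a Z N s := by
  have hceil : 0 < s.re + ⌈1 - s.re⌉₊ := by linarith [Nat.le_ceil (1 - s.re)]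
  rcases le_total N ⌈1 - s.re⌉₊ with hle | hle
  · exact h.eulerMaclaurinTruncation_eq_of_le hle hs
  · exact (h.eulerMaclaurinTruncation_eq_of_le hle hceil).symm

theorem eulerMaclaurinContinuation_eventuallyEq (h : IsDifferenceContinuation a Z)
    (hs : 0 < s.re + N) :
    eulerMaclaurinContinuation a Z =ᶠ[𝓝 s] eulerMaclaurinTruncation a Z N := by
  have hopen : IsOpen {z : ℂ | 0 < z.re + N} := isOpen_lt continuous_const (by fun_prop)
  filter_upwards [hopen.mem_nhds hs] with z hz
  exact h.eulerMaclaurinContinuation_eq_truncation hz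

theorem eulerMaclaurinContinuation_eq_LSeries (h : IsDifferenceContinuation a Z)
    (hs : 1 < s.re) : eulerMaclaurinContinuation a Z s = LSeries a s := by
  rw [h.eulerMaclaurinContinuation_eq_truncation (N := 0) (by rw [Nat.cast_zero]; linarith),
    h.eulerMaclaurinTruncation_zero hs]

theorem differentiableAt_ascPochhammer_mul_remainder (h : IsDifferenceContinuation a Z)
    (hs : 0 < s.re + N) :
    DifferentiableAt ℂ (fun z => (ascPochhammer ℂ (N + 1)).eval z *
      eulerMaclaurinRemainder a (N + 1) (z + N + 1)) s :=
  (ascPochhammer ℂ (N + 1)).differentiableAt.mul <|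
    differentiableAt_comp_add_const.2 <| differentiableAt_comp_add_const.2 <|
      differentiableAt_eulerMaclaurinRemainder h.map_zero h.abscissaOfAbsConv_le (N + 1) (by simpa)

theorem differentiableAt_eulerMaclaurinContinuation (h : IsDifferenceContinuation a Z)
    (hs : s ≠ 1) (hsub : DifferentiableAt ℂ Z (s - 1))
    (hadd : ∀ k : ℕ, eulerMaclaurinCoeff (k + 1) ≠ 0 → DifferentiableAt ℂ Z (s + k)) :
    DifferentiableAt ℂ (eulerMaclaurinContinuation a Z) s := by
  obtain ⟨N, hN⟩ := exists_nat_gt (-s.re)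
  have hsN : 0 < s.re + N := by linarith
  have hlead : DifferentiableAt ℂ (fun z => Z (z - 1) / (z - 1)) s :=
    (differentiableAt_comp_sub_const.2 hsub).div (by fun_prop) (sub_ne_zero.2 hs)
  have hterm (k : ℕ) : DifferentiableAt ℂ (fun z =>
      eulerMaclaurinCoeff (k + 1) * (ascPochhammer ℂ k).eval z * Z (z + k)) s := by
    by_cases hk : eulerMaclaurinCoeff (k + 1) = 0
    · simp [hk]
    · exact ((ascPochhammer ℂ k).differentiableAt.const_mul _).mul
        (differentiableAt_comp_add_const.2 (hadd k hk))
  exact ((hlead.fun_add (.fun_sum fun k _ => hterm k)).fun_sub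
    (h.differentiableAt_ascPochhammer_mul_remainder hsN)).congr_of_eventuallyEq
      (h.eulerMaclaurinContinuation_eventuallyEq hsN)

theorem hasSimpleResidueAt_eulerMaclaurinContinuation (h : IsDifferenceContinuation a Z)
    {p r₀ : ℂ} {r : ℕ → ℂ} (hp : 0 < p.re + N)
    (hlead : HasSimpleResidueAt (fun s => Z (s - 1) / (s - 1)) r₀ p)
    (hterm : ∀ k ∈ Finset.range (N + 1), HasSimpleResidueAt Z (r k) (p + k)) :
    HasSimpleResidueAt (eulerMaclaurinContinuation a Z)
      (r₀ + ∑ k ∈ Finset.range (N + 1),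
        eulerMaclaurinCoeff (k + 1) * (ascPochhammer ℂ k).eval p * r k) p := by
  have hsum : HasSimpleResidueAt (fun s => ∑ k ∈ Finset.range (N + 1),
      eulerMaclaurinCoeff (k + 1) * (ascPochhammer ℂ k).eval s * Z (s + k))
      (∑ k ∈ Finset.range (N + 1),
        eulerMaclaurinCoeff (k + 1) * (ascPochhammer ℂ k).eval p * r k) p :=
    .sum fun k hk => (hterm k hk).comp_add_const.continuousAt_mul
      (g := fun s => eulerMaclaurinCoeff (k + 1) * (ascPochhammer ℂ k).eval s)
      (continuousAt_const.mul (ascPochhammer ℂ k).continuousAt)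
  have htrunc := (hlead.add hsum).sub <| HasSimpleResidueAt.of_continuousAt
    (h.differentiableAt_ascPochhammer_mul_remainder hp).continuousAt
  rw [sub_zero] at htrunc
  exact htrunc.congr (h.eulerMaclaurinContinuation_eventuallyEq hp).symm

theorem hasSimpleResidueAt_zero (h : IsDifferenceContinuation a Z) {p : ℂ} (hp : p.re ≠ 0) :
    HasSimpleResidueAt Z 0 p :=
  .of_continuousAt (h.differentiableAt hp).continuousAt

theorem hasSimpleResidueAt_one_add (h : IsDifferenceContinuation a Z) {w r : ℂ}
    (hw_re : w.re = 0) (hw : w ≠ 0) (hZ : HasSimpleResidueAt Z r w) :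
    HasSimpleResidueAt (eulerMaclaurinContinuation a Z) (r / w) (1 + w) := by
  have hlead : HasSimpleResidueAt (fun s => Z (s - 1) / (s - 1)) (r / w) (1 + w) := by
    have hdiv := hZ.div_continuousAt continuousAt_id hw
    exact HasSimpleResidueAt.comp_sub_const (f := fun s => Z s / s) (by simpa using hdiv)
  have hres := h.hasSimpleResidueAt_eulerMaclaurinContinuation (N := 0) (r := 0)
    (by simp [hw_re]) hlead fun k _ => h.hasSimpleResidueAt_zero (by
      simp only [Complex.add_re, Complex.one_re, hw_re, Complex.natCast_re]; positivity)
  simpa using hres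

theorem hasSimpleResidueAt_sub_natCast (h : IsDifferenceContinuation a Z) {w r : ℂ}
    (hw_re : w.re = 0) (hZ : HasSimpleResidueAt Z r w) (k : ℕ) :
    HasSimpleResidueAt (eulerMaclaurinContinuation a Z)
      (eulerMaclaurinCoeff (k + 1) * (ascPochhammer ℂ k).eval (w - k) * r) (w - k) := by
  have hre : (w - k - 1).re < 0 := by
    simp only [Complex.sub_re, hw_re, Complex.natCast_re, Complex.one_re]
    linarith [k.cast_nonneg (α := ℝ)]
  have hlead : HasSimpleResidueAt (fun s => Z (s - 1) / (s - 1)) 0 (w - k) :=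
    .of_continuousAt (((differentiableAt_comp_sub_const.2
      (h.differentiableAt hre.ne)).continuousAt).div₀ (by fun_prop) fun h₀ => by simp [h₀] at hre)
  have hterm (j : ℕ) : HasSimpleResidueAt Z ((Pi.single k r : ℕ → ℂ) j) (w - k + j) := by
    rcases eq_or_ne j k with rfl | hjk
    · simpa using hZ
    · rw [Pi.single_eq_of_ne hjk]
      refine h.hasSimpleResidueAt_zero fun h₀ => hjk ?_
      simp only [Complex.add_re, Complex.sub_re, hw_re, Complex.natCast_re] at h₀
      exact_mod_cast (by linarith : (j : ℝ) = k)
  have hres := h.hasSimpleResidueAt_eulerMaclaurinContinuation (N := k + 1)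
    (by simp [hw_re]) hlead fun j _ => hterm j
  rwa [zero_add, Finset.sum_eq_single_of_mem k (by simp) fun j _ hjk => by simp [hjk],
    Pi.single_eq_same] at hres

theorem tendsto_sub_one_sq_mul (h : IsDifferenceContinuation a Z) {H : ℂ → ℂ} {H' : ℂ}
    (hH : HasDerivAt H H' 0) (hZ : (fun t => t * Z t) =ᶠ[𝓝[≠] 0] H) :
    Tendsto (fun s => (s - 1) ^ 2 * eulerMaclaurinContinuation a Z s) (𝓝[≠] 1) (𝓝 (H 0)) ∧
      Tendsto (fun s => ((s - 1) ^ 2 * eulerMaclaurinContinuation a Z s - H 0) / (s - 1))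
        (𝓝[≠] 1) (𝓝 H') := by
  let G : ℂ → ℂ := fun s => eulerMaclaurinCoeff 1 * Z s - s * eulerMaclaurinRemainder a 1 (s + 1)
  have hG : DifferentiableAt ℂ G 1 :=
    ((h.differentiableAt (by simp)).const_mul _).sub
      (by simpa using h.differentiableAt_ascPochhammer_mul_remainder (N := 0) (s := 1) (by simp))
  have hQ : HasDerivAt (fun s => H (s - 1) + (s - 1) ^ 2 * G s) H' 1 := by
    have hshift : HasDerivAt (fun s => H (s - 1)) H' 1 :=
      HasDerivAt.comp_sub_const 1 1 (by rwa [sub_self])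
    simpa [Pi.add_def, Pi.mul_def, Pi.pow_def] using hshift.add
      ((((hasDerivAt_id (1 : ℂ)).sub_const 1).pow 2).mul hG.hasDerivAt)
  have heq : (fun s => H (s - 1) + (s - 1) ^ 2 * G s) =ᶠ[𝓝[≠] 1]
      fun s => (s - 1) ^ 2 * eulerMaclaurinContinuation a Z s := by
    have hsub : Tendsto (fun s : ℂ => s - 1) (𝓝[≠] 1) (𝓝[≠] 0) :=
      ((Homeomorph.subRight (1 : ℂ)).map_punctured_nhds_eq 1).le.trans_eq (by simp)
    filter_upwards [hsub.eventually hZ, self_mem_nhdsWithin,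
      (h.eulerMaclaurinContinuation_eventuallyEq (s := 1) (N := 0) (by simp)).filter_mono
        nhdsWithin_le_nhds] with s hHs hs hFs
    have hs_sub : s - 1 ≠ 0 := sub_ne_zero.2 hs
    rw [hFs, ← hHs, eulerMaclaurinTruncation]
    simp only [G, zero_add, Finset.sum_range_one, ascPochhammer_zero, ascPochhammer_one,
      Polynomial.eval_one, Polynomial.eval_X, Nat.cast_zero, add_zero, mul_one]
    field_simp
    ring
  constructor
  · simpa using (hQ.continuousAt.tendsto.mono_left nhdsWithin_le_nhds).congr' heq
  · refine (hasDerivAt_iff_tendsto_slope.1 hQ).congr' (heq.mono fun s hs => ?_)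
    simp [slope_def_field, hs]

end IsDifferenceContinuation

/-! ### Digit sums -/

section DigitSum

variable {b : ℕ}

theorem digitSum_add_mul (hb : 1 < b) {r : ℕ} (hr : r < b) (n : ℕ) :
    digitSum b (r + b * n) = r + digitSum b n := by
  by_cases h : r ≠ 0 ∨ n ≠ 0
  · simp [digitSum, Nat.digits_add b hb r n hr h]
  · obtain ⟨rfl, rfl⟩ : r = 0 ∧ n = 0 := by simpa using h
    simp

theorem digitSum_le_mul_log (hb : 1 < b) (n : ℕ) : digitSum b n ≤ b * (Nat.log b n + 1) := by
  have hlength : (Nat.digits b n).length ≤ Nat.log b n + 1 :=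
    (Nat.digits_length_le_iff hb n).2 (Nat.lt_pow_succ_log_self hb n)
  calc digitSum b n ≤ (Nat.digits b n).length * b :=
        List.sum_le_card_nsmul _ b fun _ hd => (Nat.digits_lt_base hb hd).le
    _ ≤ (Nat.log b n + 1) * b := Nat.mul_le_mul_right _ hlength
    _ = b * (Nat.log b n + 1) := mul_comm _ _

theorem digitSum_isBigO_rpow (hb : 1 < b) {ε : ℝ} (hε : 0 < ε) :
    (fun n : ℕ => (digitSum b n : ℂ)) =O[atTop] fun n : ℕ => (n : ℝ) ^ ε := by
  have hlog : (fun n : ℕ => Real.log n) =O[atTop] fun n : ℕ => (n : ℝ) ^ ε :=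
    ((isLittleO_log_rpow_atTop hε).comp_tendsto tendsto_natCast_atTop_atTop).isBigO
  have hone : (fun _ : ℕ => (1 : ℝ)) =O[atTop] fun n : ℕ => (n : ℝ) ^ ε :=
    .of_bound 1 <| (eventually_ge_atTop 1).mono fun n hn => by
      rw [one_mul, norm_one]
      exact (Real.one_le_rpow (Nat.one_le_cast.2 hn) hε.le).trans (Real.le_norm_self _)
  refine Asymptotics.IsBigO.trans (.of_norm_le fun n => ?_)
    (((hlog.const_mul_left (Real.log b)⁻¹).add hone).const_mul_left (b : ℝ))
  calc ‖(digitSum b n : ℂ)‖ = digitSum b n := Complex.norm_natCast _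
    _ ≤ b * (Nat.log b n + 1) := by exact_mod_cast digitSum_le_mul_log hb n
    _ ≤ b * ((Real.log b)⁻¹ * Real.log n + 1) := by
      rw [← div_eq_inv_mul, Real.log_div_log]
      gcongr
      exact Real.natLog_le_logb n b

theorem abscissaOfAbsConv_digitSum_le_one (hb : 1 < b) :
    LSeries.abscissaOfAbsConv (fun n => (digitSum b n : ℂ)) ≤ 1 := by
  refine LSeries.abscissaOfAbsConv_le_of_forall_lt_LSeriesSummable (x := 1) fun σ hσ => ?_
  obtain ⟨x, hx, hxσ⟩ := exists_between hσ
  exact LSeriesSummable_of_isBigO_rpow (x := x) (by simpa)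
    (digitSum_isBigO_rpow hb (by linarith))

theorem backwardDiff_digitSum (hb : 1 < b) {n : ℕ} (hn : n ≠ 0) :
    backwardDiff (fun n => digitSum b n) n =
      1 + if b ∣ n then backwardDiff (fun n => digitSum b n) (n / b) - b else 0 := by
  have hb₀ : 0 < b := by lia
  obtain ⟨q, r, hr, rfl⟩ : ∃ q r, r < b ∧ n = r + b * q :=
    ⟨n / b, n % b, n.mod_lt hb₀, (n.mod_add_div b).symm⟩
  rcases r with - | r
  · obtain ⟨q, rfl⟩ : ∃ p, q = p + 1 := Nat.exists_eq_succ_of_ne_zero fun hq => by simp [hq] at hn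
    have hpred : 0 + b * (q + 1) - 1 = (b - 1) + b * q := by rw [mul_add_one]; lia
    rw [backwardDiff, hpred, digitSum_add_mul hb hr, digitSum_add_mul hb (Nat.sub_one_lt_of_lt hb)]
    simp only [backwardDiff, zero_add, dvd_mul_right, if_true, Nat.mul_div_cancel_left _ hb₀,
      Nat.add_sub_cancel, Nat.cast_add, Nat.cast_sub hb₀, Nat.cast_one]
    ring
  · have hndvd : ¬ b ∣ r + 1 + b * q := fun hdvd =>
      Nat.not_dvd_of_pos_of_lt r.succ_pos hr ((Nat.dvd_add_left (dvd_mul_right b q)).1 hdvd)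
    have hpred : r + 1 + b * q - 1 = r + b * q := by lia
    rw [backwardDiff, if_neg hndvd, hpred, digitSum_add_mul hb hr, digitSum_add_mul hb (by lia)]
    push_cast
    ring

theorem lseries_backwardDiff_digitSum_mul (hb : 1 < b) {w : ℂ} (hw : 1 < w.re) :
    LSeries (backwardDiff fun n => digitSum b n) w * ((b : ℂ) ^ w - 1) =
      riemannZeta w * ((b : ℂ) ^ w - b) := by
  have hb₀ : b ≠ 0 := by lia
  have hzeta := LSeriesHasSum_one hw
  have hdiff := (lseriesHasSum_backwardDiff (a := fun n => digitSum b n) (by simp [digitSum])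
    (abscissaOfAbsConv_digitSum_le_one hb) hw).LSeriesSummable.LSeriesHasSum
  have hself := hdiff.unique ((LSeriesHasSum_congr w _ fun hn => by
    simpa using backwardDiff_digitSum hb hn).2
      (hzeta.add (lseriesHasSum_dilation hb₀ (hdiff.sub (hzeta.smul (b : ℂ))))))
  have hcpow : (b : ℂ) ^ (-w) * (b : ℂ) ^ w = 1 := by
    rw [← Complex.cpow_add _ _ (Nat.cast_ne_zero.2 hb₀), neg_add_cancel, Complex.cpow_zero]
  linear_combination (b : ℂ) ^ w * hself +
    (LSeries (backwardDiff fun n => digitSum b n) w - b * riemannZeta w) * hcpow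

/-- The continuation of `ζ(w) (bʷ - b) / (bʷ - 1)`; the zero of `bʷ - b` at `w = 1` cancels the
pole of `ζ`, so the numerator is written with the entire functions `(w - 1) ζ(w)` and
`(bʷ - b) / (w - 1)`. -/
def digitDifferenceZeta (b : ℕ) (w : ℂ) : ℂ :=
  riemannZeta₁ w * dslope (fun z : ℂ => (b : ℂ) ^ z) 1 w / ((b : ℂ) ^ w - 1)

theorem digitDifferenceZeta_of_ne_one {w : ℂ} (hw : w ≠ 1) :
    digitDifferenceZeta b w = riemannZeta w * ((b : ℂ) ^ w - b) / ((b : ℂ) ^ w - 1) := by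
  rw [digitDifferenceZeta, dslope_of_ne _ hw, slope_def_field, Complex.cpow_one,
    riemannZeta_eq_inv_sub_mul hw]
  ring

theorem differentiableAt_digitDifferenceZeta (hb : b ≠ 0) {w : ℂ} (hw : (b : ℂ) ^ w ≠ 1) :
    DifferentiableAt ℂ (digitDifferenceZeta b) w := by
  have hcpow : Differentiable ℂ fun z : ℂ => (b : ℂ) ^ z := fun z =>
    (hasDerivAt_natCast_cpow hb z).differentiableAt
  have hslope : Differentiable ℂ (dslope (fun z : ℂ => (b : ℂ) ^ z) 1) :=
    differentiableOn_univ.1 ((Complex.differentiableOn_dslope univ_mem).2 hcpow.differentiableOn)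
  exact ((differentiable_riemannZeta₁ w).mul (hslope w)).div ((hcpow w).sub_const 1)
    (sub_ne_zero.2 hw)

theorem isDifferenceContinuation_digitSum (hb : 1 < b) :
    IsDifferenceContinuation (fun n => digitSum b n) (digitDifferenceZeta b) where
  map_zero := by simp [digitSum]
  abscissaOfAbsConv_le := abscissaOfAbsConv_digitSum_le_one hb
  lseries_eq {w} hw := by
    have hw_ne : w ≠ 1 := fun h => by simp [h] at hw
    rw [digitDifferenceZeta_of_ne_one hw_ne,
      eq_div_iff (sub_ne_zero.2 (natCast_cpow_ne_one_of_re_ne_zero hb (by linarith)))]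
    exact lseries_backwardDiff_digitSum_mul hb hw
  differentiableAt hw :=
    differentiableAt_digitDifferenceZeta (by lia) (natCast_cpow_ne_one_of_re_ne_zero hb hw)

theorem hasSimpleResidueAt_digitDifferenceZeta (hb : 1 < b) {w : ℂ} (hw : (b : ℂ) ^ w = 1) :
    HasSimpleResidueAt (digitDifferenceZeta b) (riemannZeta w * (1 - b) / Real.log b) w := by
  have hlog : (Real.log b : ℂ) ≠ 0 :=
    Complex.ofReal_ne_zero.2 (Real.log_pos (Nat.one_lt_cast.2 hb)).ne'
  have hw_ne : w ≠ 1 := by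
    rintro rfl
    exact natCast_cpow_ne_one_of_re_ne_zero hb (by simp) hw
  have hslope : Tendsto (fun z => (slope (fun z : ℂ => (b : ℂ) ^ z) w z)⁻¹) (𝓝[≠] w)
      (𝓝 (Real.log b : ℂ)⁻¹) := by
    have hderiv := hasDerivAt_natCast_cpow (b := b) (by lia) w
    rw [hw, one_mul] at hderiv
    exact (hasDerivAt_iff_tendsto_slope.1 hderiv).inv₀ hlog
  have hnum : ContinuousAt (fun z => riemannZeta z * ((b : ℂ) ^ z - b)) w :=
    ((differentiableAt_riemannZeta hw_ne).mul ((hasDerivAt_natCast_cpow (by lia)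
      w).differentiableAt.sub_const _)).continuousAt
  have hlim := (hnum.tendsto.mono_left nhdsWithin_le_nhds).mul hslope
  rw [hw, ← div_eq_mul_inv] at hlim
  refine hlim.congr' ?_
  filter_upwards [(eventually_ne_nhds hw_ne).filter_mono nhdsWithin_le_nhds] with z hz
  rw [digitDifferenceZeta_of_ne_one hz, slope_def_field, hw, inv_div]
  ring

theorem hasDerivAt_zeta_mul_sub_div_dslope (hb : 1 < b) :
    HasDerivAt
      (fun t => riemannZeta t * ((b : ℂ) ^ t - b) / dslope (fun z : ℂ => (b : ℂ) ^ z) 0 t)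
      (((b : ℂ) - 1) / (2 * Real.log b) * Real.log (2 * Real.pi) - ((b : ℂ) + 1) / 4) 0 := by
  have hb₀ : b ≠ 0 := by lia
  have hlog : (Real.log b : ℂ) ≠ 0 :=
    Complex.ofReal_ne_zero.2 (Real.log_pos (Nat.one_lt_cast.2 hb)).ne'
  have hzeta : HasDerivAt riemannZeta (-Real.log (2 * Real.pi) / 2) 0 := by
    have hderiv := (differentiableAt_riemannZeta (s := 0) (by simp)).hasDerivAt
    rw [deriv_riemannZeta_zero] at hderiv
    rw [Complex.ofReal_log (by positivity)]
    simpa using hderiv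
  convert! (hzeta.mul ((hasDerivAt_natCast_cpow hb₀ 0).sub_const (b : ℂ))).div
    (hasDerivAt_dslope_natCast_cpow_zero hb₀) (by rwa [dslope_natCast_cpow_zero hb₀]) using 1
  simp only [Pi.mul_apply, dslope_natCast_cpow_zero hb₀, riemannZeta_zero, Complex.cpow_zero]
  field_simp
  ring

theorem mul_digitDifferenceZeta_eventuallyEq (b : ℕ) :
    (fun t => t * digitDifferenceZeta b t) =ᶠ[𝓝[≠] 0]
      fun t => riemannZeta t * ((b : ℂ) ^ t - b) / dslope (fun z : ℂ => (b : ℂ) ^ z) 0 t := by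
  filter_upwards [self_mem_nhdsWithin,
    (eventually_ne_nhds zero_ne_one).filter_mono nhdsWithin_le_nhds] with t ht₀ ht₁
  rw [digitDifferenceZeta_of_ne_one ht₁, dslope_of_ne _ ht₀, slope_def_field, Complex.cpow_zero,
    sub_zero, div_div_eq_mul_div]
  ring

/-- The continuation of `∑ digitSum b n n⁻ˢ` to the plane. -/
def digitSumZeta (b : ℕ) : ℂ → ℂ :=
  eulerMaclaurinContinuation (fun n => digitSum b n) (digitDifferenceZeta b)

theorem digitSumZeta_eq_tsum (hb : 1 < b) {s : ℂ} (hs : 1 < s.re) :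
    digitSumZeta b s = ∑' n : ℕ, (digitSum b (n + 1) : ℂ) * ((n + 1 : ℕ) : ℂ) ^ (-s) := by
  rw [digitSumZeta, (isDifferenceContinuation_digitSum hb).eulerMaclaurinContinuation_eq_LSeries hs]
  rw [LSeries, (lseriesSummable_of_one_lt_re (abscissaOfAbsConv_digitSum_le_one hb)
    hs).tsum_eq_zero_add, LSeries.term_zero, zero_add]
  exact tsum_congr fun n => by
    rw [LSeries.term_of_ne_zero n.succ_ne_zero, Complex.cpow_neg, div_eq_mul_inv]

theorem differentiableAt_digitSumZeta (hb : 1 < b) {s : ℂ}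
    (hs : ∀ k : ℕ, k = 1 ∨ Even k → (b : ℂ) ^ (s + k - 1) ≠ 1) :
    DifferentiableAt ℂ (digitSumZeta b) s := by
  have hb₀ : b ≠ 0 := by lia
  have hs_sub : (b : ℂ) ^ (s - 1) ≠ 1 := by simpa using hs 0 (.inr .zero)
  refine (isDifferenceContinuation_digitSum hb).differentiableAt_eulerMaclaurinContinuation
    (fun h => hs_sub (by simp [h])) (differentiableAt_digitDifferenceZeta hb₀ hs_sub)
    fun k hk => differentiableAt_digitDifferenceZeta hb₀ ?_
  suffices k + 1 = 1 ∨ Even (k + 1) by simpa [← add_assoc] using hs (k + 1) this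
  by_contra! hodd
  exact hk (eulerMaclaurinCoeff_eq_zero (Nat.not_even_iff_odd.1 hodd.2) (by lia))

theorem tendsto_sub_one_sq_mul_digitSumZeta (hb : 1 < b) :
    Tendsto (fun s => (s - 1) ^ 2 * digitSumZeta b s) (𝓝[≠] 1)
        (𝓝 (((b : ℂ) - 1) / (2 * Real.log b))) ∧
      Tendsto
        (fun s => ((s - 1) ^ 2 * digitSumZeta b s - ((b : ℂ) - 1) / (2 * Real.log b)) / (s - 1))
        (𝓝[≠] 1) (𝓝 (((b : ℂ) - 1) / (2 * Real.log b) * Real.log (2 * Real.pi)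
          - ((b : ℂ) + 1) / 4)) := by
  have hvalue : riemannZeta 0 * ((b : ℂ) ^ (0 : ℂ) - b) / dslope (fun z : ℂ => (b : ℂ) ^ z) 0 0 =
      ((b : ℂ) - 1) / (2 * Real.log b) := by
    rw [dslope_natCast_cpow_zero (by lia), riemannZeta_zero, Complex.cpow_zero]
    ring
  simpa only [hvalue] using! (isDifferenceContinuation_digitSum hb).tendsto_sub_one_sq_mul
    (hasDerivAt_zeta_mul_sub_div_dslope hb) (mul_digitDifferenceZeta_eventuallyEq b)

theorem hasSimpleResidueAt_digitSumZeta_one_add (hb : 1 < b) {w : ℂ} (hw : (b : ℂ) ^ w = 1)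
    (hw₀ : w ≠ 0) :
    HasSimpleResidueAt (digitSumZeta b) (-((b - 1) / (Real.log b * w)) * riemannZeta w)
      (1 + w) := by
  convert! (isDifferenceContinuation_digitSum hb).hasSimpleResidueAt_one_add
    (by_contra (natCast_cpow_ne_one_of_re_ne_zero hb · hw)) hw₀
    (hasSimpleResidueAt_digitDifferenceZeta hb hw) using 1
  rw [div_div]
  ring

theorem hasSimpleResidueAt_digitSumZeta_sub_natCast (hb : 1 < b) {w : ℂ} (hw : (b : ℂ) ^ w = 1)
    (k : ℕ) :
    HasSimpleResidueAt (digitSumZeta b)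
      ((-1) ^ k * ((b - 1) / Real.log b) * riemannZeta w *
        (bernoulli (k + 1) / (k + 1).factorial) * ∏ j ∈ Finset.Icc 1 k, (w - j)) (w - k) := by
  convert! (isDifferenceContinuation_digitSum hb).hasSimpleResidueAt_sub_natCast
    (by_contra (natCast_cpow_ne_one_of_re_ne_zero hb · hw))
    (hasSimpleResidueAt_digitDifferenceZeta hb hw) k using 1
  rw [eulerMaclaurinCoeff_eq_bernoulli, ascPochhammer_eval_sub_natCast]
  ring

end DigitSum

theorem Fb_meromorphic_continuation (b : ℕ) (hb : 2 ≤ b) :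
    ∃ F : ℂ → ℂ,
      -- (i) analytic off the half-lattice of possible poles
      (∀ s : ℂ,
        s ∉ {z : ℂ | ∃ m : ℤ, ∃ k : ℕ, (k = 0 ∨ k = 1 ∨ (Even k ∧ 2 ≤ k)) ∧
              z = 1 - (k : ℂ) + 2 * Real.pi * Complex.I * m / Real.log b} →
        DifferentiableAt ℂ F s) ∧
      -- (ii) agrees with the Dirichlet series for Re(s) > 1
      (∀ s : ℂ, 1 < s.re →
        F s = ∑' n : ℕ, (digitSum b (n + 1) : ℂ) * ((n + 1 : ℕ) : ℂ) ^ (-s)) ∧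
      -- (iii) double pole at s = 1 with the stated Laurent expansion
      (Filter.Tendsto (fun s : ℂ => (s - 1) ^ 2 * F s) (𝓝[≠] (1 : ℂ))
        (𝓝 (((b : ℂ) - 1) / (2 * Real.log b))) ∧
       Filter.Tendsto
        (fun s : ℂ => ((s - 1) ^ 2 * F s - ((b : ℂ) - 1) / (2 * Real.log b)) / (s - 1))
        (𝓝[≠] (1 : ℂ))
        (𝓝 ((((b : ℂ) - 1) / (2 * Real.log b)) * Real.log (2 * Real.pi)
            - ((b : ℂ) + 1) / 4))) ∧
      -- (iv) simple poles at s = 1 + 2πim/log b, m ≠ 0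
      (∀ m : ℤ, m ≠ 0 →
        Filter.Tendsto
          (fun s : ℂ => (s - (1 + 2 * Real.pi * Complex.I * m / Real.log b)) * F s)
          (𝓝[≠] (1 + 2 * Real.pi * Complex.I * m / Real.log b))
          (𝓝 (-(((b : ℂ) - 1) / (2 * Real.pi * Complex.I * m)) *
            riemannZeta (2 * Real.pi * Complex.I * m / Real.log b)))) ∧
      -- (v) simple poles at s = 1 - k + 2πim/log b, k = 1 or k even ≥ 2
      (∀ m : ℤ, ∀ k : ℕ, (k = 1 ∨ (Even k ∧ 2 ≤ k)) →
        Filter.Tendsto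
          (fun s : ℂ =>
            (s - (1 - (k : ℂ) + 2 * Real.pi * Complex.I * m / Real.log b)) * F s)
          (𝓝[≠] (1 - (k : ℂ) + 2 * Real.pi * Complex.I * m / Real.log b))
          (𝓝 ((-1 : ℂ) ^ (k + 1) * (((b : ℂ) - 1) / Real.log b) *
            riemannZeta (2 * Real.pi * Complex.I * m / Real.log b) *
            ((bernoulli k : ℂ) / (Nat.factorial k : ℂ)) *
            ∏ j ∈ Finset.Icc 1 (k - 1),
              (2 * Real.pi * Complex.I * m / Real.log b - (j : ℂ))))) := by
  refine ⟨digitSumZeta b, fun s hs => differentiableAt_digitSumZeta hb fun k hk hpole => ?_,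
    fun s hs => digitSumZeta_eq_tsum hb hs, tendsto_sub_one_sq_mul_digitSumZeta hb,
    fun m hm => ?_, fun m k hk => ?_⟩
  · obtain ⟨m, hm⟩ := (natCast_cpow_eq_one_iff hb).1 hpole
    exact hs ⟨m, k, by grind, by linear_combination hm⟩
  · have hlog : (Real.log b : ℂ) ≠ 0 :=
      Complex.ofReal_ne_zero.2 (Real.log_pos (Nat.one_lt_cast.2 hb)).ne'
    have hres := hasSimpleResidueAt_digitSumZeta_one_add hb
      ((natCast_cpow_eq_one_iff hb).2 ⟨m, rfl⟩) (div_ne_zero (by simp [hm, Real.pi_ne_zero]) hlog)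
    rwa [mul_div_cancel₀ _ hlog] at hres
  · obtain ⟨k, rfl⟩ : ∃ j, k = j + 1 := Nat.exists_eq_succ_of_ne_zero (by grind)
    have hres := hasSimpleResidueAt_digitSumZeta_sub_natCast hb
      ((natCast_cpow_eq_one_iff hb).2 ⟨m, rfl⟩) k
    have hpole (w : ℂ) : 1 - ((k + 1 : ℕ) : ℂ) + w = w - k := by
      rw [Nat.cast_add_one]
      ring
    rw [hpole, Nat.add_sub_cancel, pow_succ, pow_succ, mul_neg_one, mul_neg_one, neg_neg]
    exact hres
end
end

section
/- For every real β > 1: the family (c_β(k))_{k ∈ ℤ} is absolutely summable, the function h_β : ℝ → ℂ defined by h_β(x) = ∑_{k ∈ ℤ} c_β(k) e^{2πikx} is continuous on ℝ, and h_β(x) is real (its imaginary part is 0) for every x ∈ ℝ. -/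
noncomputable section

/-- The Fourier coefficients `c_β(k)` from Delange's theorem. -/
def delangeCoeff (β : ℝ) (k : ℤ) : ℂ :=
  if k = 0 then
    ((((β : ℂ) - 1) / (2 * Real.log β)) * (Real.log (2 * Real.pi) - 1) - ((β : ℂ) + 1) / 4)
  else
    -(((β : ℂ) - 1) / (2 * Real.pi * Complex.I * k)) *
      (1 + 2 * Real.pi * Complex.I * k / Real.log β)⁻¹ *
      riemannZeta (2 * Real.pi * Complex.I * k / Real.log β)

/-!
The coefficient `c_β(k)` is `ζ(it) / (it (1 + it))` up to a constant factor, where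
`t = 2πk / log β`, so for absolute summability it suffices to beat `|ζ(it)| = O(|t|)` by a power
of `|t|`. The functional equation gives `|ζ(it)|² = t tanh(πt/2) / (2π) · |ζ(1 - it)|²`, so
everything rests on `ζ(1 - it) = O(|t|^θ)` for some `θ < 1/2`.

For `Re s > 1`, comparing the sum with the integral writes `ζ(s) - 1/(s - 1)` as the sum over
`a ≥ 1` of `∫ (a^{-s} - x^{-s}) dx` over `[a, a + 1]`. The integrand is at most `2 / a` trivially
and at most `|s| / a²` by the mean value inequality; interpolating gives `2 |s|^θ / a^{1 + θ}`,
whose sum is `O(|s|^θ)` uniformly in `Re s > 1`, hence on the closed half-plane by continuity. So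
`c_β(k) = O(|k|^{θ - 3/2})`, and the Fourier series converges uniformly. Its sum is real because
`ζ` commutes with complex conjugation, which swaps `c_β(k)` and `c_β(-k)`.
-/

open Asymptotics Complex Filter Function MeasureTheory Set ZetaAsymptotics
open scoped ComplexConjugate Real Topology

theorem hasSum_intervalIntegral_add_natCast {E : Type*} [NormedAddCommGroup E] [NormedSpace ℝ E]
    {μ : Measure ℝ} {f : ℝ → E} {a : ℝ} (hf : IntegrableOn f (Ioi a) μ) :
    HasSum (fun n : ℕ ↦ ∫ x in (a + n)..(a + n + 1), f x ∂μ) (∫ x in Ioi a, f x ∂μ) := by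
  have hmono : Monotone fun n : ℕ ↦ a + n := Nat.mono_cast.const_add a
  have hunion : ⋃ n : ℕ, Ioc (a + n) (a + n + 1) = Ioi a := by
    have hunbdd : ¬BddAbove (range fun n : ℕ ↦ a + n) :=
      not_bddAbove_of_tendsto_atTop
        (tendsto_atTop_add_const_left _ a tendsto_natCast_atTop_atTop)
    simpa [add_assoc] using iUnion_Ioc_map_succ_eq_Ioi (f := fun n : ℕ ↦ a + n) (by simp) hunbdd
  have hdisj : Pairwise (Disjoint on fun n : ℕ ↦ Ioc (a + n) (a + n + 1)) := by
    simpa [add_assoc] using hmono.pairwise_disjoint_on_Ioc_succ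
  rw [← hunion] at hf ⊢
  simpa only [intervalIntegral.integral_of_le (le_add_of_nonneg_right zero_le_one)] using
    hasSum_integral_iUnion (fun _ ↦ measurableSet_Ioc) hdisj hf

theorem min_le_mul_rpow {b c θ : ℝ} (hb : 0 ≤ b) (hc : 1 ≤ c) (hθ₀ : 0 ≤ θ) (hθ₁ : θ ≤ 1) :
    min b c ≤ c * b ^ θ := by
  rcases le_total b 1 with hb₁ | hb₁
  · calc min b c ≤ b := min_le_left _ _
      _ = b ^ (1 : ℝ) := (Real.rpow_one b).symm
      _ ≤ b ^ θ := Real.rpow_le_rpow_of_exponent_ge_of_imp hb hb₁ hθ₁ (by grind)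
      _ ≤ c * b ^ θ := le_mul_of_one_le_left (by positivity) hc
  · calc min b c ≤ c := min_le_right _ _
      _ ≤ c * b ^ θ := le_mul_of_one_le_right (by positivity) (Real.one_le_rpow hb₁ hθ₀)

section CpowDifference

variable {s : ℂ} {a x : ℝ}

theorem norm_cpow_neg_sub_cpow_neg_le_mul (hs : -1 ≤ s.re) (ha : 0 < a) (hax : a ≤ x) :
    ‖(a : ℂ) ^ (-s) - (x : ℂ) ^ (-s)‖ ≤ a ^ (-s.re) * (‖s‖ * (x - a) / a) := by
  have hderiv : ∀ y ∈ Icc a x, HasDerivWithinAt (fun y : ℝ ↦ (y : ℂ) ^ (-s))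
      (-s * (y : ℂ) ^ (-s - 1)) (Icc a x) y := fun y hy ↦ by
    have hmem : (y : ℂ) ∈ slitPlane := ofReal_mem_slitPlane.2 (ha.trans_le hy.1)
    simpa using ((hasDerivAt_id (y : ℂ)).cpow_const (c := -s) hmem).comp_ofReal.hasDerivWithinAt
  have hbound : ∀ y ∈ Ico a x, ‖-s * (y : ℂ) ^ (-s - 1)‖ ≤ ‖s‖ * a ^ (-s.re - 1) := fun y hy ↦ by
    rw [norm_mul, norm_neg, norm_cpow_eq_rpow_re_of_pos (ha.trans_le hy.1), sub_re, neg_re, one_re]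
    gcongr ‖s‖ * ?_
    exact Real.rpow_le_rpow_of_nonpos ha hy.1 (by linarith)
  calc ‖(a : ℂ) ^ (-s) - (x : ℂ) ^ (-s)‖
      = ‖(x : ℂ) ^ (-s) - (a : ℂ) ^ (-s)‖ := norm_sub_rev _ _
    _ ≤ ‖s‖ * a ^ (-s.re - 1) * (x - a) :=
        norm_image_sub_le_of_norm_deriv_le_segment' hderiv hbound x (right_mem_Icc.2 hax)
    _ = a ^ (-s.re) * (‖s‖ * (x - a) / a) := by rw [Real.rpow_sub_one ha.ne']; ring

theorem norm_cpow_neg_sub_cpow_neg_le_two_mul (hs : 0 ≤ s.re) (ha : 0 < a) (hax : a ≤ x) :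
    ‖(a : ℂ) ^ (-s) - (x : ℂ) ^ (-s)‖ ≤ a ^ (-s.re) * 2 := by
  calc ‖(a : ℂ) ^ (-s) - (x : ℂ) ^ (-s)‖
      ≤ ‖(a : ℂ) ^ (-s)‖ + ‖(x : ℂ) ^ (-s)‖ := norm_sub_le _ _
    _ = a ^ (-s.re) + x ^ (-s.re) := by
        rw [norm_cpow_eq_rpow_re_of_pos ha, norm_cpow_eq_rpow_re_of_pos (ha.trans_le hax), neg_re]
    _ ≤ a ^ (-s.re) + a ^ (-s.re) := by
        gcongr _ + ?_
        exact Real.rpow_le_rpow_of_nonpos ha hax (by linarith)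
    _ = a ^ (-s.re) * 2 := by ring

theorem norm_cpow_neg_sub_cpow_neg_le_rpow {θ : ℝ} (hθ₀ : 0 ≤ θ) (hθ₁ : θ ≤ 1) (hs : 0 ≤ s.re)
    (ha : 0 < a) (hax : a ≤ x) :
    ‖(a : ℂ) ^ (-s) - (x : ℂ) ^ (-s)‖ ≤ a ^ (-s.re) * (2 * (‖s‖ * (x - a) / a) ^ θ) := by
  have : 0 ≤ x - a := sub_nonneg.2 hax
  calc ‖(a : ℂ) ^ (-s) - (x : ℂ) ^ (-s)‖
      ≤ a ^ (-s.re) * min (‖s‖ * (x - a) / a) 2 := by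
        rw [mul_min_of_nonneg _ _ (by positivity)]
        exact le_min (norm_cpow_neg_sub_cpow_neg_le_mul (by linarith) ha hax)
          (norm_cpow_neg_sub_cpow_neg_le_two_mul hs ha hax)
    _ ≤ a ^ (-s.re) * (2 * (‖s‖ * (x - a) / a) ^ θ) := by
        gcongr
        exact min_le_mul_rpow (by positivity) one_le_two hθ₀ hθ₁

theorem norm_integral_cpow_neg_sub_cpow_neg_le {θ : ℝ} (hθ₀ : 0 ≤ θ) (hθ₁ : θ ≤ 1)
    (hs : 1 ≤ s.re) (ha : 1 ≤ a) :
    ‖∫ x : ℝ in a..(a + 1), ((a : ℂ) ^ (-s) - (x : ℂ) ^ (-s))‖ ≤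
      a ^ (-(1 + θ)) * (2 * ‖s‖ ^ θ) := by
  have ha₀ : 0 < a := one_pos.trans_le ha
  have hbound : ∀ x ∈ uIoc a (a + 1),
      ‖(a : ℂ) ^ (-s) - (x : ℂ) ^ (-s)‖ ≤ a ^ (-(1 + θ)) * (2 * ‖s‖ ^ θ) := by
    intro x hx
    rw [uIoc_of_le (by linarith)] at hx
    calc ‖(a : ℂ) ^ (-s) - (x : ℂ) ^ (-s)‖
        ≤ a ^ (-s.re) * (2 * (‖s‖ * (x - a) / a) ^ θ) :=
          norm_cpow_neg_sub_cpow_neg_le_rpow hθ₀ hθ₁ (by linarith) ha₀ hx.1.le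
      _ ≤ a ^ (-1 : ℝ) * (2 * (‖s‖ * 1 / a) ^ θ) := by
          have : 0 ≤ x - a := sub_nonneg.2 hx.1.le
          gcongr
          linarith [hx.2]
      _ = a ^ (-(1 + θ)) * (2 * ‖s‖ ^ θ) := by
          rw [mul_one, Real.div_rpow (norm_nonneg s) ha₀.le, neg_add, Real.rpow_add ha₀,
            Real.rpow_neg ha₀.le θ]
          ring
  simpa using intervalIntegral.norm_integral_le_of_norm_le_const hbound

end CpowDifference

theorem hasSum_integral_cpow_neg_sub_cpow_neg {s : ℂ} (hs : 1 < s.re) :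
    HasSum (fun n : ℕ ↦ ∫ x : ℝ in (1 + n : ℝ)..(1 + n + 1),
      (((1 + n : ℝ) : ℂ) ^ (-s) - (x : ℂ) ^ (-s))) (riemannZeta₀ s) := by
  have hre : (-s).re < -1 := by rw [neg_re]; linarith
  have hs₁ : s ≠ 1 := by rintro rfl; simp at hs
  have hint : IntegrableOn (fun x : ℝ ↦ (x : ℂ) ^ (-s)) (Ioi 1) :=
    integrableOn_Ioi_cpow_of_lt hre one_pos
  have hsum : HasSum (fun n : ℕ ↦ ((1 + n : ℝ) : ℂ) ^ (-s)) (riemannZeta s) := by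
    rw [zeta_eq_tsum_one_div_nat_add_one_cpow hs]
    have := (summable_nat_add_iff 1).2 (summable_one_div_nat_cpow.2 hs)
    convert! this.hasSum using 2 with n
    · simp [cpow_neg, add_comm]
    · simp
  have hintegral : ∫ x : ℝ in Ioi 1, (x : ℂ) ^ (-s) = (s - 1)⁻¹ := by
    rw [integral_Ioi_cpow_of_lt hre one_pos, ofReal_one, one_cpow,
      neg_div, ← div_neg, neg_add, neg_neg, one_div, sub_eq_add_neg]
  have hζ₀ : riemannZeta₀ s = riemannZeta s - ∫ x : ℝ in Ioi 1, (x : ℂ) ^ (-s) := by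
    rw [hintegral, riemannZeta_eq_inv_sub_add hs₁, add_sub_cancel_left]
  rw [hζ₀]
  refine (hsum.sub (hasSum_intervalIntegral_add_natCast hint)).congr_fun fun n ↦ ?_
  have : IntervalIntegrable (fun x : ℝ ↦ (x : ℂ) ^ (-s)) volume (1 + n) (1 + n + 1) := by
    rw [intervalIntegrable_iff_integrableOn_Ioc_of_le (by linarith)]
    exact hint.mono_set (Ioc_subset_Ioi_self.trans (Ioi_subset_Ioi (by simp)))
  rw [intervalIntegral.integral_sub intervalIntegrable_const this]
  simp

theorem isBigO_riemannZeta₀_norm_rpow {θ : ℝ} (hθ₀ : 0 < θ) (hθ₁ : θ ≤ 1) :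
    riemannZeta₀ =O[𝓟 {s | 1 ≤ s.re}] fun s ↦ ‖s‖ ^ θ := by
  have hsum : Summable fun n : ℕ ↦ (1 + n : ℝ) ^ (-(1 + θ)) := by
    simpa [add_comm] using
      (summable_nat_add_iff 1).2 (Real.summable_nat_rpow (p := -(1 + θ)).2 (by linarith))
  set C : ℝ := (∑' n : ℕ, (1 + n : ℝ) ^ (-(1 + θ))) * 2 with hC
  have hright (s : ℂ) (hs : s ∈ {s : ℂ | 1 < s.re}) : ‖riemannZeta₀ s‖ ≤ C * ‖s‖ ^ θ := by
    rw [hC, mul_assoc]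
    exact (hasSum_integral_cpow_neg_sub_cpow_neg hs).norm_le_of_bounded
      (hsum.hasSum.mul_right _) fun n ↦
        norm_integral_cpow_neg_sub_cpow_neg_le hθ₀.le hθ₁ (le_of_lt hs) (by simp)
  refine isBigO_principal.2 ⟨C, fun s hs ↦ ?_⟩
  rw [Real.norm_of_nonneg (by positivity)]
  have hζ : Continuous riemannZeta₀ := differentiable_riemannZeta₀.continuous
  have hpow : Continuous fun s : ℂ ↦ C * ‖s‖ ^ θ := by fun_prop (disch := grind)
  exact ContinuousWithinAt.closure_le (by rwa [closure_setOfPred_lt_re])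
    hζ.norm.continuousWithinAt hpow.continuousWithinAt hright

theorem norm_Gamma_one_sub_mul_I_sq {t : ℝ} (ht : t ≠ 0) :
    ‖Gamma (1 - t * I)‖ ^ 2 = π * t / Real.sinh (π * t) := by
  have hsin : sin (π * (t * I)) = Real.sinh (π * t) * I := by
    rw [← mul_assoc, sin_mul_I]; push_cast; rfl
  have hconj : conj (Gamma (1 - t * I)) = t * I * Gamma (t * I) := by
    rw [← Gamma_conj, ← Gamma_add_one _ (by simp [ht])]
    simp [add_comm]
  rw [← ofReal_inj]
  calc ((‖Gamma (1 - t * I)‖ ^ 2 : ℝ) : ℂ)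
      = Gamma (1 - t * I) * conj (Gamma (1 - t * I)) := by rw [mul_conj']; push_cast; rfl
    _ = t * I * (Gamma (t * I) * Gamma (1 - t * I)) := by rw [hconj]; ring
    _ = t * I * (π / (Real.sinh (π * t) * I)) := by rw [Gamma_mul_Gamma_one_sub, hsin]
    _ = ((π * t / Real.sinh (π * t) : ℝ) : ℂ) := by push_cast; field_simp

theorem norm_cos_pi_mul_one_sub_mul_I_div_two (t : ℝ) :
    ‖cos (π * (1 - t * I) / 2)‖ = |Real.sinh (π * t / 2)| := by
  have : (π * (1 - t * I) / 2 : ℂ) = π / 2 - ((π * t / 2 : ℝ) : ℂ) * I := by push_cast; ring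
  rw [this, cos_pi_div_two_sub, sin_mul_I, ← ofReal_sinh, norm_mul, norm_I, mul_one, norm_real,
    Real.norm_eq_abs]

theorem norm_riemannZeta_mul_I_sq {t : ℝ} (ht : t ≠ 0) :
    ‖riemannZeta (t * I)‖ ^ 2 =
      t * Real.tanh (π * t / 2) / (2 * π) * ‖riemannZeta (1 - t * I)‖ ^ 2 := by
  have hfe := riemannZeta_one_sub (s := 1 - t * I)
    (fun n h ↦ ht <| by simpa using congrArg im h) (by simp [ht])
  have hpow : ‖(2 * π : ℂ) ^ (-(1 - t * I))‖ = (2 * π)⁻¹ := by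
    rw [show (2 * π : ℂ) = ((2 * π : ℝ) : ℂ) by push_cast; rfl,
      norm_cpow_eq_rpow_re_of_pos (by positivity), ← Real.rpow_neg_one]
    simp
  have hsinh : Real.sinh (π * t / 2) ≠ 0 := by simp [Real.sinh_eq_zero, ht, Real.pi_ne_zero]
  have hdouble : Real.sinh (π * t) = 2 * Real.sinh (π * t / 2) * Real.cosh (π * t / 2) := by
    rw [← Real.sinh_two_mul, mul_div_cancel₀ _ two_ne_zero]
  rw [sub_sub_cancel] at hfe
  simp only [hfe, norm_mul, mul_pow, hpow, norm_Gamma_one_sub_mul_I_sq ht,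
    norm_cos_pi_mul_one_sub_mul_I_div_two, sq_abs, hdouble, Real.tanh_eq_sinh_div_cosh, norm_ofNat]
  have := (Real.cosh_pos (π * t / 2)).ne'
  field_simp

theorem norm_riemannZeta_mul_I_le {t : ℝ} (ht : t ≠ 0) :
    ‖riemannZeta (t * I)‖ ≤ |t| ^ (1 / 2 : ℝ) * ‖riemannZeta (1 - t * I)‖ := by
  have hfactor : t * Real.tanh (π * t / 2) / (2 * π) ≤ |t| := by
    rw [div_le_iff₀ (by positivity)]
    calc t * Real.tanh (π * t / 2) ≤ |t| * |Real.tanh (π * t / 2)| := by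
          rw [← abs_mul]; exact le_abs_self _
      _ ≤ |t| * (2 * π) := by
          gcongr
          linarith [Real.abs_tanh_lt_one (π * t / 2), Real.pi_gt_three]
  refine (sq_le_sq₀ (by positivity) (by positivity)).1 ?_
  rw [norm_riemannZeta_mul_I_sq ht, mul_pow, ← Real.sqrt_eq_rpow, Real.sq_sqrt (abs_nonneg t)]
  gcongr

theorem isBigO_riemannZeta_one_sub_mul_I {θ : ℝ} (hθ₀ : 0 < θ) (hθ₁ : θ ≤ 1) :
    (fun t : ℝ ↦ riemannZeta (1 - t * I)) =O[cocompact ℝ] fun t ↦ |t| ^ θ := by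
  have hne : ∀ᶠ t : ℝ in cocompact ℝ, t ≠ 0 := isCompact_singleton.compl_mem_cocompact
  have habs : Tendsto (fun t : ℝ ↦ |t|) (cocompact ℝ) atTop := tendsto_norm_cocompact_atTop
  have hone : (fun _ : ℝ ↦ (1 : ℝ)) =O[cocompact ℝ] fun t ↦ |t| :=
    (isLittleO_const_left.2 <| .inr <| tendsto_norm_atTop_atTop.comp habs).isBigO
  have hlinear : (fun t : ℝ ↦ ‖1 - t * I‖) =O[cocompact ℝ] fun t ↦ |t| := by
    refine IsBigO.trans (.of_norm_le fun t ↦ ?_) (hone.add (isBigO_refl _ _))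
    simpa using norm_sub_le (1 : ℂ) (t * I)
  have hpole : (fun t : ℝ ↦ (1 - t * I - 1 : ℂ)⁻¹) =O[cocompact ℝ] fun t ↦ |t| ^ θ := by
    have hinv : Tendsto (fun t : ℝ ↦ (1 - t * I - 1 : ℂ)⁻¹) (cocompact ℝ) (𝓝 0) := by
      rw [tendsto_zero_iff_norm_tendsto_zero]
      simpa [Function.comp_def] using tendsto_inv_atTop_zero.comp habs
    exact (hinv.isBigO_one ℝ).trans <| by simpa using hone.rpow hθ₀.le (.of_forall abs_nonneg)
  have hentire : (fun t : ℝ ↦ riemannZeta₀ (1 - t * I)) =O[cocompact ℝ] fun t ↦ |t| ^ θ :=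
    ((isBigO_riemannZeta₀_norm_rpow hθ₀ hθ₁).comp_tendsto (tendsto_principal.2 <| by simp)).trans
      (hlinear.rpow hθ₀.le (.of_forall abs_nonneg))
  refine (hpole.add hentire).congr' ?_ .rfl
  filter_upwards [hne] with t ht
  exact (riemannZeta_eq_inv_sub_add (by simpa using ht)).symm

theorem isBigO_riemannZeta_mul_I {θ : ℝ} (hθ₀ : 0 < θ) (hθ₁ : θ ≤ 1) :
    (fun t : ℝ ↦ riemannZeta (t * I)) =O[cocompact ℝ] fun t ↦ |t| ^ (1 / 2 + θ) := by
  have hne : ∀ᶠ t : ℝ in cocompact ℝ, t ≠ 0 := isCompact_singleton.compl_mem_cocompact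
  calc (fun t : ℝ ↦ riemannZeta (t * I))
      =O[cocompact ℝ] fun t ↦ |t| ^ (1 / 2 : ℝ) * ‖riemannZeta (1 - t * I)‖ :=
        .of_norm_eventuallyLE <| hne.mono fun t ↦ norm_riemannZeta_mul_I_le
    _ =O[cocompact ℝ] fun t ↦ |t| ^ (1 / 2 : ℝ) * |t| ^ θ :=
        (isBigO_refl _ _).mul (isBigO_riemannZeta_one_sub_mul_I hθ₀ hθ₁).norm_left
    _ =ᶠ[cocompact ℝ] fun t ↦ |t| ^ (1 / 2 + θ) :=
        hne.mono fun t ht ↦ (Real.rpow_add (abs_pos.2 ht) _ _).symm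

theorem isBigO_inv_mul_inv_one_add_mul_riemannZeta_mul_I {θ : ℝ} (hθ₀ : 0 < θ) (hθ₁ : θ ≤ 1) :
    (fun t : ℝ ↦ (t * I)⁻¹ * (1 + t * I)⁻¹ * riemannZeta (t * I)) =O[cocompact ℝ]
      fun t ↦ |t| ^ (θ - 3 / 2) := by
  have hne : ∀ᶠ t : ℝ in cocompact ℝ, t ≠ 0 := isCompact_singleton.compl_mem_cocompact
  have hinv : (fun t : ℝ ↦ (t * I : ℂ)⁻¹) =O[cocompact ℝ] fun t ↦ |t|⁻¹ :=
    .of_norm_le fun t ↦ by simp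
  have hinv_one_add : (fun t : ℝ ↦ (1 + t * I : ℂ)⁻¹) =O[cocompact ℝ] fun t ↦ |t|⁻¹ := by
    refine .of_norm_eventuallyLE <| hne.mono fun t ht ↦ ?_
    simpa using inv_anti₀ (abs_pos.2 ht) (by simpa using abs_im_le_norm (1 + t * I))
  refine ((hinv.mul hinv_one_add).mul (isBigO_riemannZeta_mul_I hθ₀ hθ₁)).congr' .rfl ?_
  filter_upwards [hne] with t ht
  rw [← Real.rpow_neg_one, ← Real.rpow_add (abs_pos.2 ht), ← Real.rpow_add (abs_pos.2 ht)]
  ring_nf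

theorem delangeCoeff_of_ne_zero {β : ℝ} (hβ : Real.log β ≠ 0) {k : ℤ} (hk : k ≠ 0) :
    delangeCoeff β k = -((β - 1) / Real.log β) *
      ((↑(2 * π / Real.log β * k) * I)⁻¹ * (1 + ↑(2 * π / Real.log β * k) * I)⁻¹ *
        riemannZeta (↑(2 * π / Real.log β * k) * I)) := by
  have ht : 2 * π * I * k / Real.log β = ↑(2 * π / Real.log β * k) * I := by push_cast; ring
  have hfactor : (β - 1) / (2 * π * I * k) =
      (β - 1) / Real.log β * (↑(2 * π / Real.log β * k) * I : ℂ)⁻¹ := by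
    have : (Real.log β : ℂ) ≠ 0 := ofReal_ne_zero.2 hβ
    push_cast
    field_simp
  rw [delangeCoeff, if_neg hk, ht, hfactor]
  ring

theorem summable_norm_delangeCoeff {β : ℝ} (hβ : Real.log β ≠ 0) :
    Summable fun k : ℤ ↦ ‖delangeCoeff β k‖ := by
  have hscale : Tendsto (fun k : ℤ ↦ 2 * π / Real.log β * k) cofinite (cocompact ℝ) :=
    (tendsto_cocompact_mul_left₀ (by positivity)).comp Int.tendsto_coe_cofinite
  have hdecay : delangeCoeff β =O[cofinite] fun k : ℤ ↦ |(k : ℝ)| ^ (1 / 4 - 3 / 2 : ℝ) := by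
    calc delangeCoeff β
        =ᶠ[cofinite] fun k : ℤ ↦ -((β - 1) / Real.log β) *
          ((↑(2 * π / Real.log β * k) * I)⁻¹ * (1 + ↑(2 * π / Real.log β * k) * I)⁻¹ *
            riemannZeta (↑(2 * π / Real.log β * k) * I)) :=
          (eventually_cofinite_ne 0).mono fun k ↦ delangeCoeff_of_ne_zero hβ
      _ =O[cofinite] fun k : ℤ ↦ |2 * π / Real.log β * k| ^ (1 / 4 - 3 / 2 : ℝ) :=
          ((isBigO_inv_mul_inv_one_add_mul_riemannZeta_mul_I (by norm_num)
            (by norm_num)).comp_tendsto hscale).const_mul_left _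
      _ = fun k : ℤ ↦ |2 * π / Real.log β| ^ (1 / 4 - 3 / 2 : ℝ) *
            |(k : ℝ)| ^ (1 / 4 - 3 / 2 : ℝ) := by
          simp only [abs_mul, Real.mul_rpow (abs_nonneg _) (abs_nonneg _)]
      _ =O[cofinite] fun k : ℤ ↦ |(k : ℝ)| ^ (1 / 4 - 3 / 2 : ℝ) := isBigO_const_mul_self _ _ _
  have hsum : Summable fun k : ℤ ↦ |(k : ℝ)| ^ (1 / 4 - 3 / 2 : ℝ) := by
    convert Real.summable_abs_int_rpow (b := 5 / 4) (by norm_num) using 3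
    norm_num
  exact summable_of_isBigO hsum hdecay.norm_left

theorem conj_delangeCoeff (β : ℝ) (k : ℤ) : conj (delangeCoeff β k) = delangeCoeff β (-k) := by
  rcases eq_or_ne k 0 with rfl | hk
  · simp [delangeCoeff, map_ofNat]
  · rw [delangeCoeff, delangeCoeff, if_neg hk, if_neg (neg_ne_zero.2 hk)]
    simp only [map_mul, map_neg, map_div₀, map_inv₀, map_add, map_sub, ← riemannZeta_conj, map_one,
      conj_ofReal, conj_I, map_ofNat, map_intCast, Int.cast_neg, mul_neg, neg_mul]

section FourierSeries

variable {c : ℤ → ℂ}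

theorem continuous_tsum_mul_exp (hc : Summable fun k ↦ ‖c k‖) :
    Continuous fun x : ℝ ↦ ∑' k : ℤ, c k * exp (2 * π * I * k * x) := by
  refine continuous_tsum (fun k ↦ by fun_prop) hc fun k x ↦ ?_
  have : 2 * π * I * k * x = ↑(2 * π * k * x) * I := by push_cast; ring
  rw [norm_mul, this, norm_exp_ofReal_mul_I, mul_one]

theorem im_tsum_mul_exp_eq_zero (hc : ∀ k, conj (c k) = c (-k)) (x : ℝ) :
    (∑' k : ℤ, c k * exp (2 * π * I * k * x)).im = 0 := by
  rw [← conj_eq_iff_im, conj_tsum, ← (Equiv.neg ℤ).tsum_eq]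
  refine tsum_congr fun k ↦ ?_
  simp [hc, ← exp_conj, map_ofNat]

end FourierSeries

theorem hbeta_continuous_real_valued_general (β : ℝ) (hβ₀ : 0 < β) (hβ₁ : β ≠ 1) :
    Summable (fun k : ℤ => ‖delangeCoeff β k‖) ∧
    Continuous (fun x : ℝ =>
      ∑' k : ℤ, delangeCoeff β k * Complex.exp (2 * Real.pi * Complex.I * k * x)) ∧
    ∀ x : ℝ,
      (∑' k : ℤ, delangeCoeff β k * Complex.exp (2 * Real.pi * Complex.I * k * x)).im = 0 :=
  have hsum := summable_norm_delangeCoeff (Real.log_ne_zero_of_pos_of_ne_one hβ₀ hβ₁)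
  ⟨hsum, continuous_tsum_mul_exp hsum, im_tsum_mul_exp_eq_zero (conj_delangeCoeff β)⟩

theorem hbeta_continuous_real_valued (β : ℝ) (hβ : 1 < β) :
    Summable (fun k : ℤ => ‖delangeCoeff β k‖) ∧
    Continuous (fun x : ℝ =>
      ∑' k : ℤ, delangeCoeff β k * Complex.exp (2 * Real.pi * Complex.I * k * x)) ∧
    ∀ x : ℝ,
      (∑' k : ℤ, delangeCoeff β k * Complex.exp (2 * Real.pi * Complex.I * k * x)).im = 0 :=
  hbeta_continuous_real_valued_general β (one_pos.trans hβ) hβ.ne'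
end
end
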